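/- arXiv:0809.2267 — 4 statements merged into one kernel-verified Lean document; each statement's English description precedes it below -/
import Mathlib

section
/- Ramsey's theorem for trees in all exponents: for every n ≥ 1, every k ≥ 1, and every coloring f assigning to each strictly increasing n-chain σ₁ ⊊ σ₂ ⊊ ⋯ ⊊ σₙ of elements of 2^{<ℕ} a color in Fin k, there exists a subtree S of 2^{<ℕ} isomorphic to 2^{<ℕ} such that f is constant on the set of strictly increasing n-chains of elements of S. -/
/-- Strict prefix relation on `List Bool` (σ is a proper initial segment of τ). -/
def SPrefix (σ τ : List Bool) : Prop := σ <+: τ ∧ σ ≠ τ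

/-- `S` is a subtree of `2^{<ℕ}` isomorphic to `2^{<ℕ}`: there is a bijection
`b` from `List Bool` onto `S` such that σ ⊆ τ ↔ b σ ⊆ b τ. -/
def IsoSubtree (S : Set (List Bool)) : Prop :=
  ∃ b : List Bool → List Bool,
    (∀ σ, b σ ∈ S) ∧ (∀ t ∈ S, ∃ σ, b σ = t) ∧
    Function.Injective b ∧
    ∀ σ τ : List Bool, σ <+: τ ↔ b σ <+: b τ

/-- `c` is a strictly increasing `n`-chain of elements of `S`. -/
def ChainIn (n : ℕ) (S : Set (List Bool)) (c : Fin n → List Bool) : Prop :=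
  (∀ i, c i ∈ S) ∧ ∀ i j : Fin n, i < j → SPrefix (c i) (c j)


/-!
Colorings of single nodes: choose a node `σ` above which the set of occurring colors is minimal.
Then every color occurring above `σ` is dense above `σ`, and a copy of the tree can be built inside
a dense set node by node.

Longer chains: by fusion there is a copy of the tree in which the color of an `(n + 2)`-chain does
not depend on its last node. Indeed, once a node `s` of the copy has been fixed, a node `x` above it
induces a coloring of the tuples of prefixes of `s`; there are finitely many such colorings, so the
one-node case makes the induced coloring independent of `x`. The color of an `(n + 2)`-chain is
then a function of its first `n + 1` nodes, and induction applies.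
-/

universe u v

section Tree

variable {α : Type u} {K : Type v}

/-- The strict prefix order on the tree `List α`; for `α = Bool` it unfolds to `SPrefix`. -/
def ProperPrefix (σ τ : List α) : Prop := σ <+: τ ∧ σ ≠ τ

/-- Strictly increasing chains of `n` nodes of the tree `List α`. -/
def IsProperChain {n : ℕ} (c : Fin n → List α) : Prop :=
  ∀ i j, i < j → ProperPrefix (c i) (c j)

/-- Embeddings of the tree `List α` into itself for the prefix order. Their ranges are the subtrees
isomorphic to the whole tree. -/
abbrev TreeEmbedding (α : Type u) : Type u :=
  ((· <+: ·) : List α → List α → Prop) ↪r ((· <+: ·) : List α → List α → Prop)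

theorem ProperPrefix.exists_eq_append_cons {σ τ : List α} (h : ProperPrefix σ τ) :
    ∃ a ρ, τ = σ ++ a :: ρ := by
  obtain ⟨⟨_ | ⟨a, ρ⟩, rfl⟩, hne⟩ := h
  · simp at hne
  · exact ⟨a, ρ, rfl⟩

theorem properPrefix_append_singleton (σ : List α) (a : α) : ProperPrefix σ (σ ++ [a]) :=
  ⟨List.prefix_append _ _, by simp⟩

theorem finite_subtype_prefix (σ : List α) : Finite {τ // τ <+: σ} :=
  ((List.finite_toSet σ.inits).subset fun τ hτ => (List.mem_inits τ σ).2 hτ).to_subtype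

namespace TreeEmbedding

theorem properPrefix_iff (b : TreeEmbedding α) {σ τ : List α} :
    ProperPrefix (b σ) (b τ) ↔ ProperPrefix σ τ :=
  and_congr b.map_rel_iff b.injective.ne_iff

theorem isProperChain_comp_iff (b : TreeEmbedding α) {n : ℕ} {c : Fin n → List α} :
    IsProperChain (b ∘ c) ↔ IsProperChain c :=
  forall₃_congr fun _ _ _ => b.properPrefix_iff

theorem map_prefix_append {b : List α → List α} (hmono : ∀ s a, b s <+: b (s ++ [a]))
    (s u : List α) : b s <+: b (s ++ u) := by
  induction u using List.reverseRecOn with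
  | nil => simp
  | append_singleton u a ih =>
    rw [← List.append_assoc]
    exact ih.trans (hmono _ a)

theorem prefix_of_map_prefix {b : List α → List α} (hmono : ∀ s a, b s <+: b (s ++ [a]))
    (hstrict : ∀ s a, ¬ b (s ++ [a]) <+: b s)
    (hsep : ∀ s a a', a ≠ a' → ¬ b (s ++ [a]) <+: b (s ++ [a']))
    {σ τ : List α} (h : b σ <+: b τ) : σ <+: τ := by
  induction σ generalizing b τ with
  | nil => exact List.nil_prefix
  | cons a σ ih =>
    have hchild : b [a] <+: b τ := (map_prefix_append hmono [a] σ).trans h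
    cases τ with
    | nil => exact absurd hchild (hstrict [] a)
    | cons a' τ =>
      obtain rfl : a = a' := by
        by_contra hne
        rcases List.prefix_or_prefix_of_prefix hchild (map_prefix_append hmono [a'] τ) with hle | hge
        · exact hsep [] a a' hne hle
        · exact hsep [] a' a (Ne.symm hne) hge
      exact (List.prefix_cons_inj a).2 <| ih (b := fun s => b (a :: s))
        (fun s => hmono (a :: s)) (fun s => hstrict (a :: s)) (fun s => hsep (a :: s)) h

/-- The tree embedding given by a map that strictly extends nodes along each edge and separates
siblings. -/
def ofChildren (b : List α → List α) (hmono : ∀ s a, b s <+: b (s ++ [a]))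
    (hstrict : ∀ s a, ¬ b (s ++ [a]) <+: b s)
    (hsep : ∀ s a a', a ≠ a' → ¬ b (s ++ [a]) <+: b (s ++ [a'])) : TreeEmbedding α :=
  RelEmbedding.ofMapRelIff b fun σ τ =>
    ⟨prefix_of_map_prefix hmono hstrict hsep, by
      rintro ⟨u, rfl⟩
      exact map_prefix_append hmono σ u⟩

/-- The embedding of the tree onto the nodes that start with the letter `a`. -/
def cons (a : α) : TreeEmbedding α :=
  RelEmbedding.ofMapRelIff (a :: ·) fun _ _ => List.prefix_cons_inj a

theorem exists_forall_mem {S : Set (List α)} (hne : S.Nonempty)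
    (hext : ∀ σ ∈ S, ∀ a, ∃ τ ∈ S, σ ++ [a] <+: τ) : ∃ b : TreeEmbedding α, ∀ s, b s ∈ S := by
  have hext' : ∀ (σ : S) (a : α), ∃ τ : S, σ.1 ++ [a] <+: τ.1 := fun σ a =>
    let ⟨τ, hτ, h⟩ := hext σ σ.2 a
    ⟨⟨τ, hτ⟩, h⟩
  choose next hnext using hext'
  let node (s : List α) : S := s.foldl next ⟨hne.some, hne.some_mem⟩
  have hchild (s : List α) (a : α) : (node s).1 ++ [a] <+: (node (s ++ [a])).1 := by
    simpa only [node, List.foldl_concat] using hnext (node s) a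
  refine ⟨ofChildren (fun s => (node s).1) (fun s a => (List.prefix_append _ _).trans (hchild s a))
    (fun s a h => ?_) (fun s a a' hne h => ?_), fun s => (node s).2⟩
  · simpa using ((hchild s a).trans h).length_le
  · have hsiblings : (node s).1 ++ [a] <+: (node s).1 ++ [a'] :=
      List.prefix_of_prefix_length_le ((hchild s a).trans h) (hchild s a') (by simp)
    exact hne (by simpa using hsiblings)

end TreeEmbedding

theorem exists_color_dense_above [Finite K] (f : List α → K) :
    ∃ σ color, ∀ ρ, σ <+: ρ → ∃ τ, ρ <+: τ ∧ f τ = color := by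
  let colorsAbove (ρ : List α) : Set K := f '' {τ | ρ <+: τ}
  obtain ⟨_, ⟨σ, rfl⟩, hmin⟩ :=
    (Set.range colorsAbove).toFinite.exists_minimal (Set.range_nonempty _)
  refine ⟨σ, f σ, fun ρ hρ => ?_⟩
  have hsub : colorsAbove ρ ⊆ colorsAbove σ := Set.image_mono fun _ hτ => hρ.trans hτ
  exact hmin ⟨ρ, rfl⟩ hsub ⟨σ, List.prefix_rfl, rfl⟩

theorem exists_monochromatic_embedding [Finite K] (f : List α → K) :
    ∃ (b : TreeEmbedding α) (color : K), ∀ s, f (b s) = color := by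
  obtain ⟨σ, color, hdense⟩ := exists_color_dense_above f
  have hne : {τ | σ <+: τ ∧ f τ = color}.Nonempty := hdense σ List.prefix_rfl
  obtain ⟨b, hb⟩ := TreeEmbedding.exists_forall_mem hne fun ρ hρ a =>
    have hσ : σ <+: ρ ++ [a] := hρ.1.trans (List.prefix_append _ _)
    let ⟨τ, hτ, hcolor⟩ := hdense _ hσ
    ⟨τ, ⟨hσ.trans hτ, hcolor⟩, hτ⟩
  exact ⟨b, color, fun s => (hb s).2⟩

namespace TreeEmbedding

/-- Stage `s` of the fusion of a refinement procedure `g`: passing from `s` to its child `s ++ [a]`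
refines the current embedding `e` to `e ∘ g e` and then keeps only the part above `a`. -/
def fusionStage (g : TreeEmbedding α → TreeEmbedding α) (s : List α) : TreeEmbedding α :=
  s.foldl (fun e a => (cons a).trans ((g e).trans e)) (RelEmbedding.refl _)

variable (g : TreeEmbedding α → TreeEmbedding α)

theorem fusionStage_append_singleton (s : List α) (a : α) (x : List α) :
    fusionStage g (s ++ [a]) x = fusionStage g s (g (fusionStage g s) (a :: x)) := by
  rw [fusionStage, List.foldl_append]
  rfl

theorem fusionStage_append_mem_range (s u x : List α) :
    fusionStage g (s ++ u) x ∈ Set.range (fusionStage g s) := by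
  induction u using List.reverseRecOn generalizing x with
  | nil => simp
  | append_singleton u a ih =>
    rw [← List.append_assoc, fusionStage_append_singleton]
    exact ih _

/-- The fusion of a refinement procedure `g`: the tree of the roots of its stages. -/
def fusion : TreeEmbedding α :=
  ofChildren (fun s => fusionStage g s [])
    (fun s a => by
      rw [fusionStage_append_singleton, (fusionStage g s).map_rel_iff]
      exact List.nil_prefix)
    (fun s a h => by
      rw [fusionStage_append_singleton, (fusionStage g s).map_rel_iff] at h
      have hroot : [a] <+: [] := (g _).map_rel_iff.1 (h.trans List.nil_prefix)
      simp at hroot)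
    (fun s a a' hne h => by
      rw [fusionStage_append_singleton, fusionStage_append_singleton,
        (fusionStage g s).map_rel_iff, (g _).map_rel_iff] at h
      exact hne (by simpa using h))

theorem fusion_apply (s : List α) : fusion g s = fusionStage g s [] := rfl

theorem exists_fusion_eq_of_properPrefix {s t : List α} (h : ProperPrefix s t) :
    ∃ x, fusion g t = fusionStage g s (g (fusionStage g s) x) := by
  obtain ⟨a, u, rfl⟩ := h.exists_eq_append_cons
  obtain ⟨x, hx⟩ := fusionStage_append_mem_range g (s ++ [a]) u []
  refine ⟨a :: x, ?_⟩
  rw [← fusionStage_append_singleton, hx, fusion_apply, List.append_assoc, List.singleton_append]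

end TreeEmbedding

theorem exists_endHomogeneous_embedding {C : List α → Type v} [∀ s, Finite (C s)]
    (f : ∀ s, List α → C s) :
    ∃ b : TreeEmbedding α, ∀ s t t', ProperPrefix s t → ProperPrefix s t' →
      f (b s) (b t) = f (b s) (b t') := by
  have hrefine (e : TreeEmbedding α) : ∃ (g : TreeEmbedding α) (color : C (e [])),
      ∀ x, f (e []) (e (g x)) = color :=
    exists_monochromatic_embedding fun x => f (e []) (e x)
  choose g color hg using hrefine
  refine ⟨TreeEmbedding.fusion g, fun s t t' ht ht' => ?_⟩
  obtain ⟨x, hx⟩ := TreeEmbedding.exists_fusion_eq_of_properPrefix g ht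
  obtain ⟨x', hx'⟩ := TreeEmbedding.exists_fusion_eq_of_properPrefix g ht'
  rw [hx, hx']
  exact (hg _ x).trans (hg _ x').symm

theorem exists_embedding_snoc_eq_snoc [Finite K] {n : ℕ} (f : (Fin (n + 1) → List α) → K) :
    ∃ b : TreeEmbedding α, ∀ s t t', ProperPrefix s t → ProperPrefix s t' →
      ∀ c : Fin n → List α, (∀ i, c i <+: s) →
        f (b ∘ Fin.snoc c t) = f (b ∘ Fin.snoc c t') := by
  have := finite_subtype_prefix (α := α)
  obtain ⟨b, hb⟩ := exists_endHomogeneous_embedding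
    (C := fun s => (Fin n → {τ // τ <+: s}) → K) fun _ x c => f (Fin.snoc (fun i => (c i).1) x)
  refine ⟨b, fun s t t' ht ht' c hc => ?_⟩
  rw [Fin.comp_snoc, Fin.comp_snoc]
  exact congrFun (hb s t t' ht ht') fun i => ⟨b (c i), b.map_rel_iff.2 (hc i)⟩

theorem exists_embedding_forall_isProperChain_succ [Nonempty α] [Finite K] (n : ℕ)
    (f : (Fin (n + 1) → List α) → K) :
    ∃ (b : TreeEmbedding α) (color : K), ∀ c, IsProperChain c → f (b ∘ c) = color := by
  induction n with
  | zero =>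
    obtain ⟨b, color, hb⟩ := exists_monochromatic_embedding fun x => f fun _ => x
    refine ⟨b, color, fun c _ => ?_⟩
    rw [← hb (c 0)]
    exact congrArg f (funext fun i => congrArg (b ∘ c) (Fin.fin_one_eq_zero i))
  | succ n ih =>
    obtain ⟨a⟩ := ‹Nonempty α›
    obtain ⟨b, hb⟩ := exists_embedding_snoc_eq_snoc f
    obtain ⟨g, color, hg⟩ := ih fun c => f (b ∘ Fin.snoc c (c (Fin.last n) ++ [a]))
    refine ⟨g.trans b, color, fun c hc => ?_⟩
    have hgc : IsProperChain (g ∘ c) := g.isProperChain_comp_iff.2 hc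
    have hprefix (i : Fin (n + 1)) : (g ∘ c) i.castSucc <+: (g ∘ c) (Fin.last n).castSucc := by
      rcases (Fin.le_last i).eq_or_lt with rfl | hi
      · exact List.prefix_rfl
      · exact (hgc _ _ (Fin.castSucc_lt_castSucc_iff.2 hi)).1
    calc f (b ∘ (g ∘ c))
        = f (b ∘ Fin.snoc (Fin.init (g ∘ c)) ((g ∘ c) (Fin.last (n + 1)))) := by
          rw [Fin.snoc_init_self]
      _ = f (b ∘ Fin.snoc (Fin.init (g ∘ c)) ((g ∘ c) (Fin.last n).castSucc ++ [a])) :=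
          hb _ _ _ (hgc _ _ (Fin.castSucc_lt_last _)) (properPrefix_append_singleton _ a) _ hprefix
      _ = color := hg (Fin.init c) fun i j hij => hc _ _ (Fin.castSucc_lt_castSucc_iff.2 hij)

theorem tree_ramsey_all_exponents_general [Nonempty α] [Finite K] (n : ℕ)
    (f : (Fin n → List α) → K) :
    ∃ (b : TreeEmbedding α) (color : K), ∀ c : Fin n → List α,
      (∀ i, c i ∈ Set.range b) → IsProperChain c → f c = color := by
  cases n with
  | zero => exact ⟨RelEmbedding.refl _, f default, fun c _ _ => congrArg f (Subsingleton.elim _ _)⟩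
  | succ n =>
    obtain ⟨b, color, hb⟩ := exists_embedding_forall_isProperChain_succ n f
    refine ⟨b, color, fun c hrange hc => ?_⟩
    choose d hd using hrange
    obtain rfl : b ∘ d = c := funext hd
    exact hb d (b.isProperChain_comp_iff.1 hc)

end Tree

theorem isoSubtree_range (b : TreeEmbedding Bool) : IsoSubtree (Set.range b) :=
  ⟨b, Set.mem_range_self, fun _ ht => ht, b.injective, fun _ _ => b.map_rel_iff.symm⟩

/-- Ramsey's theorem for trees in all exponents. -/
theorem tree_ramsey_all_exponents (n k : ℕ) (hn : 1 ≤ n) (hk : 1 ≤ k)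
    (f : (Fin n → List Bool) → Fin k) :
    ∃ S : Set (List Bool), IsoSubtree S ∧
      ∃ col : Fin k, ∀ c : Fin n → List Bool, ChainIn n S c → f c = col := by
  obtain ⟨b, color, hb⟩ := tree_ramsey_all_exponents_general n f
  exact ⟨Set.range b, isoSubtree_range b, color, fun c hc => hb c hc.1 hc.2⟩
end

section
/- Ramsey's theorem for trees in exponent one: for every k ≥ 1 and every coloring h : List Bool → Fin k of the nodes of 2^{<ℕ}, and every subtree T of 2^{<ℕ} isomorphic to 2^{<ℕ}, there exist a color c ∈ Fin k and a subtree S ⊆ T isomorphic to 2^{<ℕ} such that h(σ) = c for all σ ∈ S. -/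
/-!
Among the cones `{τ | σ <+: τ}` choose one on which a minimal set of colors appears. Every smaller
cone then shows the same colors, so the color `c` of its root is dense in it. Starting from this
root and repeatedly moving to a node of color `c` above each of the two children of the current node
builds a copy of the binary tree in color `c`. A subtree `T` is handled by pulling the coloring back
along its parametrization.
-/

theorem exists_fiber_cofinal_above {P κ : Type*} [Nonempty P] [Finite κ]
    (r : P → P → Prop) [IsPreorder P r] (f : P → κ) :
    ∃ p, ∀ q, r p q → ∃ s, r q s ∧ f s = f p := by
  obtain ⟨p, -, hp⟩ := exists_minimalFor_of_wellFoundedLT (fun _ : P ↦ True)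
    (fun p ↦ f '' {q | r p q}) ⟨Classical.arbitrary P, trivial⟩
  refine ⟨p, fun q hpq ↦ ?_⟩
  have colors_anti : f '' {s | r q s} ⊆ f '' {s | r p s} :=
    Set.image_mono fun _ hqs ↦ trans_of r hpq hqs
  exact hp trivial colors_anti ⟨p, refl_of r p, rfl⟩

section PrefixEmbedding

variable {α β : Type*}

theorem injective_of_prefix_iff_prefix {f : List α → List β}
    (hf : ∀ σ τ, σ <+: τ ↔ f σ <+: f τ) : Function.Injective f := by
  intro σ τ heq
  have hστ : σ <+: τ := (hf σ τ).2 (heq ▸ List.prefix_rfl)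
  have hτσ : τ <+: σ := (hf τ σ).2 (heq ▸ List.prefix_rfl)
  exact antisymm_of (· <+: ·) hστ hτσ

/-- A map of trees preserves branches if it sends the `x`-th child of a node into the cone above the
`x`-th child of the node's image. This one-step condition is what makes a map built by recursion
along the tree an embedding for the prefix order. -/
def PreservesBranches (f : List α → List α) : Prop :=
  ∀ σ x, f σ ++ [x] <+: f (σ ++ [x])

namespace PreservesBranches

variable {f : List α → List α}

theorem apply_prefix_apply (hf : PreservesBranches f) {σ τ : List α} (hστ : σ <+: τ) :
    f σ <+: f τ := by
  induction τ using List.reverseRecOn with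
  | nil => rw [List.prefix_nil.1 hστ]
  | append_singleton τ x ih =>
    rcases List.prefix_concat_iff.1 hστ with rfl | hστ
    · exact List.prefix_rfl
    · exact (ih hστ).trans ((List.prefix_append _ _).trans (hf τ x))

theorem append_singleton_prefix_apply (hf : PreservesBranches f) {σ τ : List α} {x : α}
    (hστ : σ ++ [x] <+: τ) : f σ ++ [x] <+: f τ :=
  (hf σ x).trans (hf.apply_prefix_apply hστ)

theorem prefix_of_apply_prefix_apply (hf : PreservesBranches f) {σ τ : List α}
    (hfστ : f σ <+: f τ) : σ <+: τ := by
  induction σ using List.reverseRecOn with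
  | nil => exact List.nil_prefix
  | append_singleton σ x ih =>
    have hx : f σ ++ [x] <+: f τ := (hf σ x).trans hfστ
    obtain ⟨ρ, rfl⟩ := ih ((List.prefix_append _ _).trans hx)
    cases ρ with
    | nil => simpa using hx.length_le
    | cons y ρ =>
      have hy : f σ ++ [y] <+: f (σ ++ y :: ρ) := hf.append_singleton_prefix_apply (by simp)
      have heq : f σ ++ [x] = f σ ++ [y] :=
        (List.prefix_of_prefix_length_le hx hy (by simp)).eq_of_length (by simp)
      obtain rfl : x = y := by simpa using heq
      simp

theorem prefix_iff_apply_prefix_apply (hf : PreservesBranches f) (σ τ : List α) :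
    σ <+: τ ↔ f σ <+: f τ :=
  ⟨hf.apply_prefix_apply, hf.prefix_of_apply_prefix_apply⟩

end PreservesBranches

/-- The map of trees which sends the root to `pick []` and, once `σ` is sent to `τ`, sends the child
`σ ++ [x]` to `pick (τ ++ [x])`. It embeds the tree into the range of `pick`
whenever `pick` moves every node upwards. -/
def treeOfPick (pick : List α → List α) (σ : List α) : List α :=
  σ.foldl (fun τ x ↦ pick (τ ++ [x])) (pick [])

theorem treeOfPick_append_singleton (pick : List α → List α) (σ : List α) (x : α) :
    treeOfPick pick (σ ++ [x]) = pick (treeOfPick pick σ ++ [x]) := by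
  simp [treeOfPick]

theorem treeOfPick_mem_range (pick : List α → List α) (σ : List α) :
    treeOfPick pick σ ∈ Set.range pick := by
  cases σ using List.reverseRecOn with
  | nil => exact ⟨[], rfl⟩
  | append_singleton σ x => exact ⟨_, (treeOfPick_append_singleton pick σ x).symm⟩

theorem preservesBranches_treeOfPick {pick : List α → List α} (hpick : ∀ σ, σ <+: pick σ) :
    PreservesBranches (treeOfPick pick) :=
  fun σ x ↦ treeOfPick_append_singleton pick σ x ▸ hpick _

theorem exists_prefix_embedding_of_dense {D : Set (List α)} (hD : ∀ σ, ∃ τ ∈ D, σ <+: τ) :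
    ∃ f : List α → List α, (∀ σ τ, σ <+: τ ↔ f σ <+: f τ) ∧ ∀ σ, f σ ∈ D := by
  choose pick pick_mem prefix_pick using hD
  have hbranch : PreservesBranches (treeOfPick pick) := preservesBranches_treeOfPick prefix_pick
  refine ⟨treeOfPick pick, hbranch.prefix_iff_apply_prefix_apply, fun σ ↦ ?_⟩
  obtain ⟨τ, hτ⟩ := treeOfPick_mem_range pick σ
  exact hτ ▸ pick_mem τ

theorem exists_monochromatic_prefix_embedding {κ : Type*} [Finite κ] (g : List α → κ) :
    ∃ c, ∃ f : List α → List α, (∀ σ τ, σ <+: τ ↔ f σ <+: f τ) ∧ ∀ σ, g (f σ) = c := by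
  obtain ⟨ρ, hρ⟩ := exists_fiber_cofinal_above (· <+: ·) g
  have dense_above : ∀ σ, ∃ τ ∈ {τ | g (ρ ++ τ) = g ρ}, σ <+: τ := by
    intro σ
    obtain ⟨_, ⟨τ, rfl⟩, hτ⟩ := hρ (ρ ++ σ) (List.prefix_append ρ σ)
    exact ⟨σ ++ τ, by simpa using hτ, List.prefix_append σ τ⟩
  obtain ⟨f, hf, hfc⟩ := exists_prefix_embedding_of_dense dense_above
  exact ⟨g ρ, fun σ ↦ ρ ++ f σ,
    fun σ τ ↦ (hf σ τ).trans (List.prefix_append_right_inj ρ).symm, hfc⟩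

end PrefixEmbedding

theorem isoSubtree_range_s1 {b : List Bool → List Bool} (hb : ∀ σ τ, σ <+: τ ↔ b σ <+: b τ) :
    IsoSubtree (Set.range b) :=
  ⟨b, Set.mem_range_self, fun _ ht ↦ ht, injective_of_prefix_iff_prefix hb, hb⟩

theorem tree_ramsey_exponent_one_general {κ : Type*} [Finite κ] (h : List Bool → κ)
    (T : Set (List Bool)) (hT : IsoSubtree T) :
    ∃ c : κ, ∃ S : Set (List Bool), S ⊆ T ∧ IsoSubtree S ∧ ∀ σ ∈ S, h σ = c := by
  obtain ⟨b, hbT, -, -, hb⟩ := hT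
  obtain ⟨c, f, hf, hfc⟩ := exists_monochromatic_prefix_embedding (h ∘ b)
  refine ⟨c, Set.range (b ∘ f), ?_, ?_, ?_⟩
  · exact Set.range_subset_iff.2 fun σ ↦ hbT (f σ)
  · exact isoSubtree_range_s1 fun σ τ ↦ (hf σ τ).trans (hb _ _)
  · exact Set.forall_mem_range.2 hfc

/-- Ramsey's theorem for trees in exponent one. -/
theorem tree_ramsey_exponent_one (k : ℕ) (hk : 1 ≤ k)
    (h : List Bool → Fin k)
    (T : Set (List Bool)) (hT : IsoSubtree T) :
    ∃ c : Fin k, ∃ S : Set (List Bool), S ⊆ T ∧ IsoSubtree S ∧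
      ∀ σ ∈ S, h σ = c := by
  exact tree_ramsey_exponent_one_general h T hT
end

section
/- End-homogeneity step of the exponent-lowering lemma: for every n ≥ 1, every k ≥ 1, every subtree R of 2^{<ℕ} isomorphic to 2^{<ℕ}, and every coloring f of the strictly increasing (n+1)-chains of R with colors in Fin k, there exists a subtree S ⊆ R isomorphic to 2^{<ℕ} such that for every n-chain σ₁ ⊊ ⋯ ⊊ σₙ of elements of S and all τ, τ′ ∈ S with σₙ ⊊ τ and σₙ ⊊ τ′, one has f(σ₁, …, σₙ, τ) = f(σ₁, …, σₙ, τ′). -/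
/-!
The argument is a fusion. A finite colouring of the nodes of a tree is constant on some embedded
copy of the tree: either one colour is dense, and a copy is built inside it by always extending to
the next node of that colour, or some copy omits the colour, and one inducts on the colours left.

Now build `S` from the root upwards. Once a node `σ` is placed, the tuples below `σ` are finite in
number, so each later node `τ` receives a single finite colour, the function
`(σ₁, …, σₙ) ↦ f (σ₁, …, σₙ, τ)` on these tuples. Thinning the part of the tree above `σ`
makes this function independent of `τ`, and the construction continues at the children of `σ`.
-/

open Set

section Fusion

variable {α : Type*}

/-- An embedding of the tree `α^{<ℕ}` of finite sequences, ordered by the prefix relation, into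
itself. Subtrees isomorphic to `α^{<ℕ}` are handled as the ranges of such embeddings. -/
abbrev PrefixEmbedding (α : Type*) :=
  ((· <+: ·) : List α → List α → Prop) ↪r ((· <+: ·) : List α → List α → Prop)

namespace PrefixEmbedding

/-- The embedding of the whole tree onto the cone of extensions of `s`. -/
def append (s : List α) : PrefixEmbedding α :=
  RelEmbedding.ofMapRelIff (s ++ ·) fun _ _ => List.prefix_append_right_inj s

/-- The embedding that agrees with `T` except that it fixes the root: it thins the tree above the
root without moving the root itself. -/
def reroot (T : PrefixEmbedding α) : PrefixEmbedding α :=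
  RelEmbedding.ofMapRelIff
    (fun
      | [] => []
      | a :: σ => T (a :: σ))
    (by
      rintro (_ | ⟨a, σ⟩) (_ | ⟨b, τ⟩)
      · simp
      · simp
      · have hroot : T (a :: σ) ≠ [] := fun h => by
          simpa using T.map_rel_iff.1 (h ▸ List.nil_prefix : T (a :: σ) <+: T [])
        simpa using hroot
      · exact T.map_rel_iff)

end PrefixEmbedding

/-- `F` is assembled from embeddings with the property `P`: at each node `σ` there is such an
embedding `D` whose root is `F σ` and which contains everything `F` puts above `σ`, with
the immediate successors of `σ` kept in distinct cones of `D`. -/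
def IsFusion (P : PrefixEmbedding α → Prop) (F : List α → List α) : Prop :=
  ∀ σ, ∃ D, P D ∧ F σ = D [] ∧ ∀ a ρ, F (σ ++ a :: ρ) ∈ range fun ρ' => D (a :: ρ')

namespace IsFusion

variable {P : PrefixEmbedding α → Prop} {F : List α → List α}

theorem comp_cons (hF : IsFusion P F) (a : α) : IsFusion P fun σ => F (a :: σ) :=
  fun σ => hF (a :: σ)

theorem prefix_iff (hF : IsFusion P F) (σ τ : List α) : F σ <+: F τ ↔ σ <+: τ := by
  induction σ generalizing F τ with
  | nil =>
    obtain ⟨D, -, hroot, habove⟩ := hF []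
    simp only [List.nil_append] at habove
    cases τ with
    | nil => simp
    | cons b τ =>
      obtain ⟨τ', hτ'⟩ := habove b τ
      rw [hroot, ← hτ', D.map_rel_iff]
      simp
  | cons a σ ih =>
    obtain ⟨D, -, hroot, habove⟩ := hF []
    simp only [List.nil_append] at habove
    obtain ⟨σ', hσ'⟩ := habove a σ
    cases τ with
    | nil =>
      rw [hroot, ← hσ', D.map_rel_iff]
      simp
    | cons b τ =>
      by_cases hab : a = b
      · subst hab
        rw [List.prefix_cons_inj]
        exact ih (hF.comp_cons a) τ
      · obtain ⟨τ', hτ'⟩ := habove b τ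
        rw [← hσ', ← hτ', D.map_rel_iff]
        simp only [List.cons_prefix_cons, hab, false_and]

end IsFusion

theorem exists_isFusion {P : PrefixEmbedding α → Prop}
    (hP : ∀ E : PrefixEmbedding α, ∃ D : PrefixEmbedding α, range D ⊆ range E ∧ P D)
    (E : PrefixEmbedding α) :
    ∃ F : PrefixEmbedding α, range F ⊆ range E ∧ IsFusion P F := by
  choose thin thin_subset thin_prop using hP
  let step (D : PrefixEmbedding α) (a : α) : PrefixEmbedding α :=
    thin ((PrefixEmbedding.append [a]).trans D)
  let node (σ : List α) : PrefixEmbedding α := σ.foldl step (thin E)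
  have step_subset (D : PrefixEmbedding α) (a : α) :
      range (step D a) ⊆ range fun ρ => D (a :: ρ) := thin_subset _
  have foldl_subset (ρ : List α) (D : PrefixEmbedding α) :
      range (ρ.foldl step D : PrefixEmbedding α) ⊆ range D := by
    induction ρ generalizing D with
    | nil => exact subset_rfl
    | cons a ρ ih =>
      exact (ih _).trans <| (step_subset D a).trans <| range_comp_subset_range (a :: ·) D
  have node_prop (σ : List α) : P (node σ) := by
    cases σ using List.reverseRecOn with
    | nil => exact thin_prop E
    | append_singleton σ a =>
      simp only [node, List.foldl_append]
      exact thin_prop _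
  have node_above (σ : List α) (a : α) (ρ : List α) :
      node (σ ++ a :: ρ) [] ∈ range fun ρ' => node σ (a :: ρ') := by
    simp only [node, List.foldl_append]
    exact step_subset _ a (foldl_subset ρ _ (mem_range_self []))
  have hfusion : IsFusion P fun σ => node σ [] :=
    fun σ => ⟨node σ, node_prop σ, rfl, node_above σ⟩
  refine ⟨RelEmbedding.ofMapRelIff _ hfusion.prefix_iff, ?_, hfusion⟩
  rintro _ ⟨σ, rfl⟩
  exact thin_subset E (foldl_subset σ _ (mem_range_self []))

theorem exists_prefixEmbedding_color_eq {κ : Type*} [Finite κ] (c : List α → κ) :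
    ∃ (T : PrefixEmbedding α) (i : κ), ∀ ρ, c (T ρ) = i := by
  suffices h : ∀ s : Set κ, s.Finite → ∀ c : List α → κ, (∀ ρ, c ρ ∈ s) →
      ∃ (T : PrefixEmbedding α) (i : κ), ∀ ρ, c (T ρ) = i from
    h univ finite_univ c fun _ => mem_univ _
  intro s hs
  induction s, hs using Set.Finite.induction_on with
  | empty => exact fun c hc => (hc []).elim
  | @insert i s _ _ ih =>
    intro c hc
    by_cases hdense : ∀ D : PrefixEmbedding α, ∃ ρ, c (D ρ) = i
    · obtain ⟨F, -, hF⟩ := exists_isFusion (P := fun D => c (D []) = i)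
        (fun E => by
          obtain ⟨ρ, hρ⟩ := hdense E
          refine ⟨(PrefixEmbedding.append ρ).trans E, range_comp_subset_range _ E, ?_⟩
          simpa [PrefixEmbedding.append] using hρ)
        (RelEmbedding.refl _)
      refine ⟨F, i, fun σ => ?_⟩
      obtain ⟨D, hD, hσ, -⟩ := hF σ
      rw [hσ, hD]
    · push Not at hdense
      obtain ⟨D, hD⟩ := hdense
      obtain ⟨T, j, hT⟩ := ih (c ∘ D) fun ρ => (hc (D ρ)).resolve_left (hD ρ)
      exact ⟨T.trans D, j, hT⟩

theorem exists_prefixEmbedding_color_eq_above {κ : List α → Type*} [∀ σ, Finite (κ σ)]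
    (χ : ∀ σ : List α, List α → κ σ) (E : PrefixEmbedding α) :
    ∃ F : PrefixEmbedding α, range F ⊆ range E ∧
      ∀ σ ∈ range F, ∀ τ ∈ range F, ∀ τ' ∈ range F,
        σ <+: τ ∧ σ ≠ τ → σ <+: τ' ∧ σ ≠ τ' → χ σ τ = χ σ τ' := by
  obtain ⟨F, hFE, hF⟩ := exists_isFusion
    (P := fun D => ∀ a ρ b ρ', χ (D []) (D (a :: ρ)) = χ (D []) (D (b :: ρ')))
    (fun E => by
      obtain ⟨T, i, hT⟩ := exists_prefixEmbedding_color_eq fun ρ => χ (E []) (E ρ)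
      exact ⟨T.reroot.trans E, range_comp_subset_range _ E,
        fun a ρ b ρ' => (hT (a :: ρ)).trans (hT (b :: ρ')).symm⟩)
    E
  refine ⟨F, hFE, ?_⟩
  rintro _ ⟨σ, rfl⟩
  obtain ⟨D, hD, hσ, habove⟩ := hF σ
  have mem_above (τ : List α) (hτ : F σ <+: F τ ∧ F σ ≠ F τ) : ∃ a ρ, D (a :: ρ) = F τ := by
    obtain ⟨_ | ⟨a, ρ⟩, rfl⟩ := F.map_rel_iff.1 hτ.1
    · simp at hτ
    · exact ⟨a, habove a ρ⟩
  rintro _ ⟨τ, rfl⟩ _ ⟨τ', rfl⟩ hτ hτ'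
  obtain ⟨a, ρ, hρ⟩ := mem_above τ hτ
  obtain ⟨b, ρ', hρ'⟩ := mem_above τ' hτ'
  rw [← hρ, ← hρ', hσ]
  exact hD a ρ b ρ'

theorem end_homogeneity_general {κ : Type*} [Finite κ] {n : ℕ}
    (f : (Fin (n + 1) → List α) → κ) (E : PrefixEmbedding α) :
    ∃ F : PrefixEmbedding α, range F ⊆ range E ∧
      ∀ c : Fin n → List α, ∀ σ ∈ range F, (∀ i, c i <+: σ) →
        ∀ τ ∈ range F, ∀ τ' ∈ range F, σ <+: τ ∧ σ ≠ τ → σ <+: τ' ∧ σ ≠ τ' →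
          f (Fin.snoc c τ) = f (Fin.snoc c τ') := by
  have finite_prefixes (σ : List α) : Finite {ρ // ρ <+: σ} :=
    (List.finite_toSet σ.inits).subset fun ρ hρ => (List.mem_inits ρ σ).2 hρ
  obtain ⟨F, hFE, hF⟩ := exists_prefixEmbedding_color_eq_above
    (κ := fun σ => (Fin n → {ρ // ρ <+: σ}) → κ)
    (fun σ τ c => f (Fin.snoc (fun i => (c i : List α)) τ)) E
  exact ⟨F, hFE, fun c σ hσ hc τ hτ τ' hτ' hστ hστ' =>
    congrFun (hF σ hσ τ hτ τ' hτ' hστ hστ') fun i => ⟨c i, hc i⟩⟩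

end Fusion

theorem isoSubtree_iff_exists_range_eq {S : Set (List Bool)} :
    IsoSubtree S ↔ ∃ E : PrefixEmbedding Bool, range E = S := by
  constructor
  · rintro ⟨b, hmem, hsurj, -, hb⟩
    exact ⟨RelEmbedding.ofMapRelIff b fun σ τ => (hb σ τ).symm,
      (range_subset_iff.2 hmem).antisymm hsurj⟩
  · rintro ⟨E, rfl⟩
    exact ⟨E, mem_range_self, fun _ ht => ht, E.injective, fun _ _ => E.map_rel_iff.symm⟩

theorem ChainIn.prefix_of_le {n : ℕ} {S : Set (List Bool)} {c : Fin n → List Bool}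
    (hc : ChainIn n S c) {i j : Fin n} (hij : i ≤ j) : c i <+: c j := by
  obtain rfl | hlt := hij.eq_or_lt
  · exact List.prefix_rfl
  · exact (hc.2 i j hlt).1

/-- End-homogeneity step of the exponent-lowering lemma. -/
theorem end_homogeneity (n k : ℕ) (hn : 1 ≤ n) (hk : 1 ≤ k)
    (R : Set (List Bool)) (hR : IsoSubtree R)
    (f : (Fin (n + 1) → List Bool) → Fin k) :
    ∃ S : Set (List Bool), S ⊆ R ∧ IsoSubtree S ∧
      ∀ c : Fin n → List Bool, ChainIn n S c →
        ∀ τ ∈ S, ∀ τ' ∈ S,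
          SPrefix (c ⟨n - 1, by omega⟩) τ → SPrefix (c ⟨n - 1, by omega⟩) τ' →
          f (Fin.snoc c τ) = f (Fin.snoc c τ') := by
  obtain ⟨E, rfl⟩ := isoSubtree_iff_exists_range_eq.1 hR
  obtain ⟨F, hFE, hF⟩ := end_homogeneity_general f E
  exact ⟨range F, hFE, isoSubtree_iff_exists_range_eq.2 ⟨F, rfl⟩, fun c hc =>
    hF c _ (hc.1 _) fun i => hc.prefix_of_le (Nat.le_sub_one_of_lt i.isLt)⟩
end

section
/- Reduction of Ramsey's theorem to tree Ramsey: let n ≥ 1, k ≥ 1, and let f assign to each strictly increasing n-tuple m₁ < m₂ < ⋯ < mₙ of natural numbers a color in Fin k. Define g on strictly increasing n-chains of 2^{<ℕ} by g(σ₁, …, σₙ) = f(length σ₁, …, length σₙ). If S is a subtree of 2^{<ℕ} isomorphic to 2^{<ℕ} on which g is constant on n-chains, then there exists an infinite set H ⊆ ℕ such that f is constant on all strictly increasing n-tuples drawn from H. -/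
/-!
An isomorphism `b` of the full tree onto `S` carries the branch `true, true, …` to an infinite chain
in `S`. Lengths strictly increase along that chain, so they form an infinite set `H`, and every
increasing `n`-tuple from `H` is the tuple of lengths of an `n`-chain of `S`.
-/

theorem exists_strictMono_comp_eq {ι α β : Type*} [Preorder ι] [LinearOrder α] [Preorder β]
    {u : α → β} (hu : StrictMono u) {t : ι → β} (ht : StrictMono t)
    (hrange : ∀ i, t i ∈ Set.range u) : ∃ m : ι → α, StrictMono m ∧ u ∘ m = t := by
  choose m hm using hrange
  refine ⟨m, fun i j hij => hu.lt_iff_lt.1 ?_, funext hm⟩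
  simpa only [hm] using ht hij

namespace SPrefix

theorem length_lt {σ τ : List Bool} (h : SPrefix σ τ) : σ.length < τ.length :=
  h.1.length_le.lt_of_ne fun hlen => h.2 (h.1.eq_of_length hlen)

theorem map {b : List Bool → List Bool} (hinj : Function.Injective b)
    (hb : ∀ σ τ, σ <+: τ → b σ <+: b τ) {σ τ : List Bool} (h : SPrefix σ τ) :
    SPrefix (b σ) (b τ) :=
  ⟨hb _ _ h.1, hinj.ne h.2⟩

theorem replicate (a : Bool) {i j : ℕ} (hij : i < j) :
    SPrefix (List.replicate i a) (List.replicate j a) :=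
  ⟨List.prefix_replicate_iff.2 ⟨by simpa using hij.le, by simp⟩,
    fun h => hij.ne (by simpa using congrArg List.length h)⟩

end SPrefix

/-- `c` is an infinite chain of `S`, the analogue of `ChainIn` for sequences: its terms lie in `S`
and each is a proper initial segment of all later ones. -/
def InfiniteChainIn (S : Set (List Bool)) (c : ℕ → List Bool) : Prop :=
  (∀ m, c m ∈ S) ∧ ∀ ⦃i j : ℕ⦄, i < j → SPrefix (c i) (c j)

namespace InfiniteChainIn

variable {S : Set (List Bool)} {c : ℕ → List Bool}

theorem strictMono_length (hc : InfiniteChainIn S c) : StrictMono fun m => (c m).length :=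
  fun _ _ hij => (hc.2 hij).length_lt

theorem chainIn_comp (hc : InfiniteChainIn S c) {n : ℕ} {m : Fin n → ℕ} (hm : StrictMono m) :
    ChainIn n S (c ∘ m) :=
  ⟨fun i => hc.1 (m i), fun _ _ hij => hc.2 (hm hij)⟩

end InfiniteChainIn

theorem IsoSubtree.exists_infiniteChainIn {S : Set (List Bool)} (hS : IsoSubtree S) :
    ∃ c, InfiniteChainIn S c := by
  obtain ⟨b, hbS, -, hinj, hb⟩ := hS
  exact ⟨fun m => b (List.replicate m true), fun _ => hbS _,
    fun _ _ hij => (SPrefix.replicate true hij).map hinj fun σ τ => (hb σ τ).1⟩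

theorem ramsey_from_tree_ramsey_general {n : ℕ} {κ : Type*} (f : (Fin n → ℕ) → κ)
    {S : Set (List Bool)} (hS : ∃ c, InfiniteChainIn S c) (col : κ)
    (hmono : ∀ c : Fin n → List Bool, ChainIn n S c → f (fun i => (c i).length) = col) :
    ∃ H : Set ℕ, H.Infinite ∧
      ∀ t : Fin n → ℕ, (∀ i, t i ∈ H) → StrictMono t → f t = col := by
  obtain ⟨c, hc⟩ := hS
  refine ⟨Set.range fun m => (c m).length,
    Set.infinite_range_of_injective hc.strictMono_length.injective, fun t htH ht => ?_⟩
  obtain ⟨m, hm, rfl⟩ := exists_strictMono_comp_eq hc.strictMono_length ht htH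
  exact hmono (c ∘ m) (hc.chainIn_comp hm)

/-- Reduction of Ramsey's theorem to tree Ramsey. -/
theorem ramsey_from_tree_ramsey (n k : ℕ) (hn : 1 ≤ n) (hk : 1 ≤ k)
    (f : (Fin n → ℕ) → Fin k)
    (g : (Fin n → List Bool) → Fin k)
    (hg : ∀ c : Fin n → List Bool, g c = f (fun i => (c i).length))
    (S : Set (List Bool)) (hS : IsoSubtree S)
    (col : Fin k) (hmono : ∀ c : Fin n → List Bool, ChainIn n S c → g c = col) :
    ∃ H : Set ℕ, H.Infinite ∧ ∃ colf : Fin k,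
      ∀ t : Fin n → ℕ, (∀ i, t i ∈ H) → StrictMono t → f t = colf := by
  obtain ⟨H, hH, hf⟩ := ramsey_from_tree_ramsey_general f hS.exists_infiniteChainIn col
    fun c hc => (hg c).symm.trans (hmono c hc)
  exact ⟨H, hH, col, hf⟩
end
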